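/- Let f : ℝ → ℝ be Lipschitz with constant L, let A, B be bounded self-adjoint operators on a separable complex Hilbert space H, and let Q be a bounded operator on H. Then for every Hilbert basis (e_i) of H, Σ_i ‖(f(A)Q − Q f(B)) e_i‖² ≤ L²·Σ_i ‖(AQ − QB) e_i‖² (both sums computed in [0, ∞]). In other words, for the quasicommutator one has ‖f(A)Q − Q f(B)‖_{S₂} ≤ L·‖AQ − QB‖_{S₂}; in particular, if AQ − QB is Hilbert–Schmidt then so is f(A)Q − Q f(B). -/

import Mathlib

open scoped ENNReal

/-!
Identify the Hilbert–Schmidt operators `K → H` with the Hilbert space `ℓ²(ι, H)` of their columns.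
Left multiplication by `A` and right multiplication by `B` are commuting self-adjoint operators
`a` and `b` on it, and for a polynomial `p` with divided difference `p^[1]`,
`p(A)Q - Q p(B) = p^[1](a, b) (AQ - QB)`. The functional calculus of the normal operator `a + ib`
gives `‖p^[1](a, b)‖ ≤ sup |p^[1]| ≤ sup |p'|`, which is the estimate for polynomials. Rescaled
Bernstein polynomials approximate a Lipschitz function uniformly without increasing its Lipschitz
constant, and the Hilbert–Schmidt norm is lower semicontinuous, so the estimate survives in the
limit.
-/

noncomputable section

open scoped NNReal Topology InnerProductSpace lp
open Polynomial Filter Set ContinuousLinearMap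

section Bernstein

/-- The polynomial of degree at most `n` with coefficients `c 0, …, c n` in the Bernstein basis. -/
def bernsteinCombination {R : Type*} [CommRing R] (n : ℕ) (c : ℕ → R) : R[X] :=
  ∑ k ∈ Finset.range (n + 1), C (c k) * bernsteinPolynomial R n k

theorem derivative_bernsteinCombination_succ {R : Type*} [CommRing R] (n : ℕ) (c : ℕ → R) :
    derivative (bernsteinCombination (n + 1) c) =
      bernsteinCombination n fun k ↦ (n + 1) * (c (k + 1) - c k) := by
  let b (k : ℕ) : R[X] := bernsteinPolynomial R n k
  have shift : ∑ k ∈ Finset.range (n + 1), C (c k) * ((n + 1) * b k) =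
      ∑ k ∈ Finset.range (n + 1), C (c (k + 1)) * ((n + 1) * b (k + 1)) +
        C (c 0) * ((n + 1) * b 0) := by
    rw [← Finset.sum_range_succ' fun k ↦ C (c k) * ((n + 1) * b k), Finset.sum_range_succ _ (n + 1)]
    simp [b, bernsteinPolynomial.eq_zero_of_lt R n.lt_succ_self]
  calc derivative (bernsteinCombination (n + 1) c)
    _ = ∑ k ∈ Finset.range (n + 1), C (c (k + 1)) * ((n + 1) * (b k - b (k + 1))) -
          C (c 0) * ((n + 1) * b 0) := by
      rw [bernsteinCombination, Finset.sum_range_succ']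
      simp only [map_add, map_sum, derivative_C_mul, bernsteinPolynomial.derivative_succ_aux,
        bernsteinPolynomial.derivative_zero, Nat.cast_add, Nat.cast_one, add_tsub_cancel_right, b]
      ring
    _ = ∑ k ∈ Finset.range (n + 1), C (c (k + 1)) * ((n + 1) * b k) -
          ∑ k ∈ Finset.range (n + 1), C (c k) * ((n + 1) * b k) := by
      simp only [shift, mul_sub, Finset.sum_sub_distrib]
      ring
    _ = bernsteinCombination n fun k ↦ (n + 1) * (c (k + 1) - c k) := by
      rw [bernsteinCombination, ← Finset.sum_sub_distrib]
      refine Finset.sum_congr rfl fun k _ ↦ ?_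
      simp only [b, map_mul, map_add, map_sub, map_natCast, map_one]
      ring

theorem abs_eval_bernsteinCombination_le {n : ℕ} {c : ℕ → ℝ} {K : ℝ} (hc : ∀ k, |c k| ≤ K)
    {x : ℝ} (hx : x ∈ Icc (0 : ℝ) 1) : |(bernsteinCombination n c).eval x| ≤ K := by
  have nonneg (k : ℕ) : 0 ≤ (bernsteinPolynomial ℝ n k).eval x :=
    bernstein_nonneg (n := n) (ν := k) (x := ⟨x, hx⟩)
  calc |(bernsteinCombination n c).eval x|
    _ ≤ ∑ k ∈ Finset.range (n + 1), |c k * (bernsteinPolynomial ℝ n k).eval x| := by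
      simpa only [bernsteinCombination, eval_finsetSum, eval_mul, eval_C] using
        Finset.abs_sum_le_sum_abs _ _
    _ ≤ ∑ k ∈ Finset.range (n + 1), K * (bernsteinPolynomial ℝ n k).eval x := by
      gcongr with k
      rw [abs_mul, abs_of_nonneg (nonneg k)]
      exact mul_le_mul_of_nonneg_right (hc k) (nonneg k)
    _ = K := by
      rw [← Finset.mul_sum, ← eval_finsetSum, bernsteinPolynomial.sum, eval_one, mul_one]

theorem tendstoUniformlyOn_eval_bernsteinCombination {f : ℝ → ℝ} (hf : Continuous f) :
    TendstoUniformlyOn (fun (n : ℕ) x ↦ (bernsteinCombination n fun k ↦ f (k / n)).eval x)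
      f atTop (Icc 0 1) := by
  let g : C(unitInterval, ℝ) := ⟨fun x ↦ f x, by fun_prop⟩
  have hg := ContinuousMap.tendsto_iff_tendstoUniformly.1 (bernsteinApproximation_uniform g)
  rw [tendstoUniformlyOn_iff_tendstoUniformly_comp_coe]
  convert hg using 3 with n x
  · simp [g, bernsteinCombination, bernsteinApproximation.apply, eval_finsetSum, Finset.sum_range,
      bernstein, bernstein.z, mul_comm]
  · rfl

theorem abs_eval_derivative_bernsteinCombination_le {f : ℝ → ℝ} {L : ℝ≥0} (hf : LipschitzWith L f)
    (n : ℕ) {x : ℝ} (hx : x ∈ Icc (0 : ℝ) 1) :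
    |(derivative (bernsteinCombination (n + 1) fun k ↦ f (k / (n + 1 : ℕ)))).eval x| ≤ L := by
  rw [derivative_bernsteinCombination_succ]
  refine abs_eval_bernsteinCombination_le (fun k ↦ ?_) hx
  have hn : (0 : ℝ) < n + 1 := by positivity
  calc |(n + 1) * (f ((k + 1 : ℕ) / (n + 1 : ℕ)) - f (k / (n + 1 : ℕ)))|
    _ ≤ (n + 1) * (L * |((k + 1 : ℕ) : ℝ) / (n + 1 : ℕ) - k / (n + 1 : ℕ)|) := by
      rw [abs_mul, abs_of_pos hn]
      gcongr
      exact hf.dist_le_mul _ _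
    _ = L := by
      push_cast
      rw [← sub_div, add_sub_cancel_left, abs_of_pos (by positivity)]
      field_simp

theorem exists_polynomial_tendstoUniformlyOn_of_lipschitzWith {f : ℝ → ℝ} {L : ℝ≥0}
    (hf : LipschitzWith L f) {a b : ℝ} (hab : a < b) :
    ∃ p : ℕ → ℝ[X], (∀ n, ∀ x ∈ Icc a b, |(derivative (p n)).eval x| ≤ L) ∧
      TendstoUniformlyOn (fun n x ↦ (p n).eval x) f atTop (Icc a b) := by
  have hba : 0 < b - a := sub_pos.2 hab
  let g (u : ℝ) : ℝ := f (a + (b - a) * u)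
  have hg : LipschitzWith (L * (b - a).toNNReal) g := by
    refine hf.comp (.of_dist_le_mul fun u v ↦ ?_)
    rw [Real.coe_toNNReal _ hba.le, dist_add_left, ← smul_eq_mul, ← smul_eq_mul, dist_smul₀,
      Real.norm_of_nonneg hba.le]
  let q (n : ℕ) : ℝ[X] := bernsteinCombination (n + 1) fun k ↦ g (k / (n + 1 : ℕ))
  let r : ℝ[X] := C (b - a)⁻¹ * (X - C a)
  have hr {x : ℝ} (hx : x ∈ Icc a b) : r.eval x ∈ Icc (0 : ℝ) 1 := by
    simp only [r, eval_mul, eval_C, eval_sub, eval_X, inv_mul_eq_div]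
    exact ⟨div_nonneg (sub_nonneg.2 hx.1) hba.le, (div_le_one hba).2 (by linarith [hx.2])⟩
  refine ⟨fun n ↦ (q n).comp r, fun n x hx ↦ ?_, ?_⟩
  · have hq := abs_eval_derivative_bernsteinCombination_le hg n (hr hx)
    rw [NNReal.coe_mul, Real.coe_toNNReal _ hba.le] at hq
    have hr' : (derivative r).eval x = (b - a)⁻¹ := by simp [r]
    rw [derivative_comp, eval_mul, eval_comp, abs_mul, hr', abs_of_pos (inv_pos.2 hba),
      inv_mul_le_iff₀ hba, mul_comm]
    exact hq
  · have hgr (x : ℝ) : g (r.eval x) = f x := by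
      simp [g, r, mul_inv_cancel_left₀ hba.ne']
    have hq : TendstoUniformlyOn (fun n u ↦ (q n).eval u) g atTop (Icc 0 1) :=
      fun u hu ↦ (tendsto_add_atTop_nat 1).eventually
        (tendstoUniformlyOn_eval_bernsteinCombination hg.continuous u hu)
    simpa only [eval_comp, Function.comp_def, hgr] using
      (hq.comp fun x ↦ r.eval x).mono fun x hx ↦ hr hx

end Bernstein

section DividedDifference

variable {R A : Type*} [CommSemiring R]

/-- The divided difference `p^[1](a, b)` of a polynomial `p`: the linear extension to all
polynomials of `X ^ k ↦ ∑ j < k, a ^ j * b ^ (k - 1 - j)`. This makes sense for arbitrary elements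
of an algebra, and is the usual quotient `(p(a) - p(b)) / (a - b)` where the latter is defined. -/
def dividedDifference [Semiring A] [Algebra R A] (p : R[X]) (a b : A) : A :=
  p.sum fun k c ↦ c • ∑ j ∈ Finset.range k, a ^ j * b ^ (k - 1 - j)

theorem map_dividedDifference {B F : Type*} [Semiring A] [Algebra R A] [Semiring B] [Algebra R B]
    [FunLike F A B] [AlgHomClass F R A B] (φ : F) (p : R[X]) (a b : A) :
    φ (dividedDifference p a b) = dividedDifference p (φ a) (φ b) := by
  simp [dividedDifference, Polynomial.sum]

theorem dividedDifference_self [CommSemiring A] [Algebra R A] (p : R[X]) (a : A) :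
    dividedDifference p a a = aeval a (derivative p) := by
  rw [dividedDifference, derivative, LinearMap.coe_mk, AddHom.coe_mk, Polynomial.sum,
    Polynomial.sum, map_sum]
  refine Finset.sum_congr rfl fun k _ ↦ ?_
  rw [Finset.sum_congr rfl (g := fun _ ↦ a ^ (k - 1)) fun j hj ↦ ?_]
  · simp [Algebra.smul_def, mul_assoc]
  · have := Finset.mem_range.1 hj
    rw [← pow_add]
    congr 1
    omega

theorem dividedDifference_mul_sub [Ring A] [Algebra R A] (p : R[X]) {a b : A}
    (h : Commute a b) : dividedDifference p a b * (a - b) = aeval a p - aeval b p := by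
  simp only [dividedDifference, Polynomial.sum, Finset.sum_mul, smul_mul_assoc, h.geom_sum₂_mul]
  simp only [mul_sub, Finset.sum_sub_distrib, aeval_def, eval₂_eq_sum,
    Polynomial.sum, Algebra.smul_def]

theorem abs_dividedDifference_le {p : ℝ[X]} {s : Set ℝ} (hs : Convex ℝ s) {L : ℝ}
    (hp : ∀ x ∈ s, |(derivative p).eval x| ≤ L) {x y : ℝ} (hx : x ∈ s) (hy : y ∈ s) :
    |dividedDifference p x y| ≤ L := by
  obtain rfl | hne := eq_or_ne x y
  · simpa [dividedDifference_self, coe_aeval_eq_eval] using hp x hx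
  have mvt : |p.eval x - p.eval y| ≤ L * |x - y| :=
    hs.norm_image_sub_le_of_norm_hasDerivWithin_le (fun z _ ↦ p.hasDerivWithinAt z s) hp hy hx
  refine le_of_mul_le_mul_right ?_ (abs_pos.2 (sub_ne_zero.2 hne))
  rwa [← abs_mul, dividedDifference_mul_sub p (Commute.all x y), coe_aeval_eq_eval,
    coe_aeval_eq_eval]

end DividedDifference

section CStarAlgebra

variable {p : ℝ[X]} {L M : ℝ}

theorem norm_dividedDifference_continuousMap_le {X : Type*} [TopologicalSpace X] [CompactSpace X]
    {f g : C(X, ℂ)} (hf : IsSelfAdjoint f) (hg : IsSelfAdjoint g) (hfM : ‖f‖ ≤ M) (hgM : ‖g‖ ≤ M)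
    (hp : ∀ t ∈ Icc (-M) M, |(derivative p).eval t| ≤ L) :
    ‖dividedDifference p f g‖ ≤ L := by
  have M_nonneg : 0 ≤ M := (norm_nonneg f).trans hfM
  have L_nonneg : 0 ≤ L := (abs_nonneg _).trans (hp 0 ⟨neg_nonpos.2 M_nonneg, M_nonneg⟩)
  rw [ContinuousMap.norm_le _ L_nonneg]
  intro x
  have real_valued {h : C(X, ℂ)} (hh : IsSelfAdjoint h) : ((h x).re : ℂ) = h x :=
    Complex.conj_eq_iff_re.1 (DFunLike.congr_fun hh.star_eq x)
  have mem_Icc {h : C(X, ℂ)} (hhM : ‖h‖ ≤ M) : (h x).re ∈ Icc (-M) M :=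
    abs_le.1 ((Complex.abs_re_le_norm _).trans ((h.norm_coe_le_norm x).trans hhM))
  have eval_eq : dividedDifference p f g x = (dividedDifference p (f x).re (g x).re : ℝ) :=
    calc dividedDifference p f g x
      _ = dividedDifference p (f x) (g x) :=
        map_dividedDifference
          ((ContinuousMap.evalStarAlgHom ℂ ℂ x).toAlgHom.restrictScalars ℝ) p f g
      _ = (dividedDifference p (f x).re (g x).re : ℝ) := by
        rw [← real_valued hf, ← real_valued hg]
        exact (map_dividedDifference Complex.ofRealAm p _ _).symm
  rw [eval_eq, Complex.norm_real]
  exact abs_dividedDifference_le (convex_Icc _ _) hp (mem_Icc hfM) (mem_Icc hgM)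

variable {A : Type*} [CStarAlgebra A]

open scoped ComplexStarModule in
theorem norm_dividedDifference_realPart_imaginaryPart_le (n : A) [IsStarNormal n]
    (hre : ‖(ℜ n : A)‖ ≤ M) (him : ‖(ℑ n : A)‖ ≤ M)
    (hp : ∀ t ∈ Icc (-M) M, |(derivative p).eval t| ≤ L) :
    ‖dividedDifference p (ℜ n : A) (ℑ n)‖ ≤ L := by
  let z : C(spectrum ℂ n, ℂ) := .restrict (spectrum ℂ n) (.id ℂ)
  let φ : C(spectrum ℂ n, ℂ) →⋆ₐ[ℂ] A := cfcHom (R := ℂ) (a := n) ‹_›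
  have norm_φ (g : C(spectrum ℂ n, ℂ)) : ‖φ g‖ = ‖g‖ := norm_cfcHom n g
  have φ_z : φ z = n := cfcHom_id _
  have φ_re : φ (ℜ z) = ℜ n := by rw [map_realPart, φ_z]
  have φ_im : φ (ℑ z) = ℑ n := by rw [map_imaginaryPart, φ_z]
  have φ_dividedDifference : φ (dividedDifference p (ℜ z : C(spectrum ℂ n, ℂ)) (ℑ z)) =
      dividedDifference p (ℜ n : A) (ℑ n) := by
    rw [← φ_re, ← φ_im]
    exact map_dividedDifference (φ.toAlgHom.restrictScalars ℝ) p _ _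
  rw [← φ_re, norm_φ] at hre
  rw [← φ_im, norm_φ] at him
  rw [← φ_dividedDifference, norm_φ]
  exact norm_dividedDifference_continuousMap_le (ℜ z).2 (ℑ z).2 hre him hp

open scoped ComplexStarModule in
theorem norm_dividedDifference_le {a b : A} (ha : IsSelfAdjoint a) (hb : IsSelfAdjoint b)
    (hab : Commute a b) (haM : ‖a‖ ≤ M) (hbM : ‖b‖ ≤ M)
    (hp : ∀ t ∈ Icc (-M) M, |(derivative p).eval t| ≤ L) : ‖dividedDifference p a b‖ ≤ L := by
  have re_eq : (ℜ (a + Complex.I • b) : A) = a := by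
    simp [realPart_I_smul, hb.imaginaryPart, ha.coe_realPart]
  have im_eq : (ℑ (a + Complex.I • b) : A) = b := by
    simp [imaginaryPart_I_smul, ha.imaginaryPart, hb.coe_realPart]
  have normal : IsStarNormal (a + Complex.I • b) := by
    rwa [isStarNormal_iff_commute_realPart_imaginaryPart, re_eq, im_eq]
  rw [← re_eq] at haM
  rw [← im_eq] at hbM
  simpa only [re_eq, im_eq] using
    norm_dividedDifference_realPart_imaginaryPart_le (a + Complex.I • b) haM hbM hp

theorem tendsto_aeval_cfc_of_tendstoUniformlyOn {a : A} (ha : IsSelfAdjoint a)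
    (haM : ‖a‖ ≤ M) {f : ℝ → ℝ} {p : ℕ → ℝ[X]}
    (hp : TendstoUniformlyOn (fun n x ↦ (p n).eval x) f atTop (Icc (-M) M)) :
    Tendsto (fun n ↦ aeval a (p n)) atTop (𝓝 (cfc f a)) := by
  have spectrum_subset : spectrum ℝ a ⊆ Icc (-M) M := fun x hx ↦ by
    have : Nontrivial A := not_subsingleton_iff_nontrivial.1 fun _ ↦ by
      simp [spectrum.of_subsingleton] at hx
    exact abs_le.1 ((spectrum.norm_le_norm_of_mem hx).trans haM)
  simp only [← cfc_polynomial _ a ha]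
  exact tendsto_cfc_fun (hp.mono spectrum_subset) (.of_forall fun n ↦ (p n).continuousOn)

end CStarAlgebra

section HilbertSchmidt

variable {ι κ 𝕜 G H K : Type*} [RCLike 𝕜] [NormedAddCommGroup G] [InnerProductSpace 𝕜 G]
  [NormedAddCommGroup H] [InnerProductSpace 𝕜 H] [NormedAddCommGroup K] [InnerProductSpace 𝕜 K]

theorem lp_enorm_sq_eq_tsum {E : ι → Type*} [∀ i, NormedAddCommGroup (E i)] (x : lp E 2) :
    ‖x‖ₑ ^ 2 = ∑' i, ‖x i‖ₑ ^ 2 := by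
  have two_pos : 0 < (2 : ℝ≥0∞).toReal := by norm_num
  have norm_sq : ‖x‖ ^ 2 = ∑' i, ‖x i‖ ^ 2 := by
    simpa using lp.norm_rpow_eq_tsum two_pos x
  have summable : Summable fun i ↦ ‖x i‖ ^ 2 := by
    simpa using (lp.memℓp x).summable two_pos
  simp only [← ofReal_norm, ← ENNReal.ofReal_pow (norm_nonneg _), norm_sq]
  exact ENNReal.ofReal_tsum_of_nonneg (fun i ↦ by positivity) summable

theorem enorm_sq_eq_tsum_enorm_inner_sq (e : HilbertBasis ι 𝕜 K) (v : K) :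
    ‖v‖ₑ ^ 2 = ∑' i, ‖⟪e i, v⟫_𝕜‖ₑ ^ 2 := by
  simp only [← e.repr_apply_apply, ← lp_enorm_sq_eq_tsum, LinearIsometryEquiv.enorm_map]

theorem ext_hilbertBasis (e : HilbertBasis ι 𝕜 K) {S T : K →L[𝕜] H}
    (h : ∀ i, S (e i) = T (e i)) : S = T :=
  ext_on (Submodule.dense_iff_topologicalClosure_eq_top.2 e.dense_span) (forall_mem_range.2 h)

/-- The square of the Hilbert–Schmidt norm of `T`, computed in `[0, ∞]` from the Hilbert basis
`e`. -/
def hilbertSchmidtNormSq (e : HilbertBasis ι 𝕜 K) (T : K →L[𝕜] H) : ℝ≥0∞ :=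
  ∑' i, ‖T (e i)‖ₑ ^ 2

theorem memℓp_two_of_hilbertSchmidtNormSq_ne_top {e : HilbertBasis ι 𝕜 K} {T : K →L[𝕜] H}
    (hT : hilbertSchmidtNormSq e T ≠ ∞) : Memℓp (fun i ↦ T (e i)) 2 :=
  memℓp_gen (by simpa using ENNReal.summable_toReal hT)

theorem lowerSemicontinuous_hilbertSchmidtNormSq (e : HilbertBasis ι 𝕜 K) :
    LowerSemicontinuous (hilbertSchmidtNormSq (H := H) e) :=
  lowerSemicontinuous_tsum fun i ↦ Continuous.lowerSemicontinuous <| by fun_prop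

theorem hilbertSchmidtNormSq_comp_le_enorm_left_sq_mul (e : HilbertBasis ι 𝕜 K) (A : H →L[𝕜] G)
    (T : K →L[𝕜] H) :
    hilbertSchmidtNormSq e (A ∘L T) ≤ ‖A‖ₑ ^ 2 * hilbertSchmidtNormSq e T := by
  rw [hilbertSchmidtNormSq, hilbertSchmidtNormSq, ← ENNReal.tsum_mul_left]
  gcongr with i
  rw [← mul_pow]
  gcongr
  exact A.le_opENorm (T (e i))

theorem hilbertSchmidtNormSq_adjoint [CompleteSpace H] [CompleteSpace K] (e : HilbertBasis ι 𝕜 K)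
    (b : HilbertBasis κ 𝕜 H) (T : K →L[𝕜] H) :
    hilbertSchmidtNormSq b (adjoint T) = hilbertSchmidtNormSq e T := by
  simp only [hilbertSchmidtNormSq, enorm_sq_eq_tsum_enorm_inner_sq e,
    enorm_sq_eq_tsum_enorm_inner_sq b]
  rw [ENNReal.tsum_comm]
  refine tsum_congr fun i ↦ tsum_congr fun j ↦ ?_
  rw [adjoint_inner_right, ← ofReal_norm, norm_inner_symm, ofReal_norm]

theorem hilbertSchmidtNormSq_comp_le_enorm_right_sq_mul [CompleteSpace G] [CompleteSpace H]
    [CompleteSpace K] (e : HilbertBasis ι 𝕜 K) (e' : HilbertBasis κ 𝕜 G) (T : K →L[𝕜] H)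
    (B : G →L[𝕜] K) :
    hilbertSchmidtNormSq e' (T ∘L B) ≤ ‖B‖ₑ ^ 2 * hilbertSchmidtNormSq e T := by
  obtain ⟨_, b, -⟩ := exists_hilbertBasis 𝕜 H
  calc hilbertSchmidtNormSq e' (T ∘L B)
    _ = hilbertSchmidtNormSq b (adjoint B ∘L adjoint T) := by
      rw [← adjoint_comp, hilbertSchmidtNormSq_adjoint e' b]
    _ ≤ ‖adjoint B‖ₑ ^ 2 * hilbertSchmidtNormSq b (adjoint T) :=
      hilbertSchmidtNormSq_comp_le_enorm_left_sq_mul b _ _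
    _ = ‖B‖ₑ ^ 2 * hilbertSchmidtNormSq e T := by
      rw [hilbertSchmidtNormSq_adjoint e b, LinearIsometryEquiv.enorm_map]

section OfColumns

variable [CompleteSpace H] (e : HilbertBasis ι 𝕜 K)

/-- The Hilbert–Schmidt operator with columns `x i`, that is, with `e i ↦ x i`. Its range consists
of all Hilbert–Schmidt operators, so that `ℓ²(ι, H)` is a model of this Hilbert space. -/
def ofColumns : ℓ²(ι, H) →L[𝕜] K →L[𝕜] H :=
  precomp H (e.repr : K →L[𝕜] ℓ²(ι, 𝕜)) ∘L
    (lp.dualPairing 2 2 (fun _ : ι ↦ lsmul (E := H) 𝕜 𝕜) (K := 1) fun _ ↦ opNorm_lsmul_le).flip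

theorem ofColumns_apply (x : ℓ²(ι, H)) (v : K) : ofColumns e x v = ∑' i, ⟪e i, v⟫_𝕜 • x i := by
  simp only [← e.repr_apply_apply]
  rfl

theorem ofColumns_apply_basis (x : ℓ²(ι, H)) (i : ι) : ofColumns e x (e i) = x i := by
  rw [ofColumns_apply, tsum_eq_single i fun j hj ↦ by simp [e.orthonormal.inner_eq_zero hj]]
  simp [e.orthonormal.1 i]

theorem ofColumns_single [DecidableEq ι] (i : ι) (h : H) (v : K) :
    ofColumns e (lp.single 2 i h) v = ⟪e i, v⟫_𝕜 • h := by
  rw [ofColumns_apply, tsum_eq_single i fun j hj ↦ by simp [hj]]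
  simp

theorem ofColumns_injective : Function.Injective (ofColumns (H := H) e) := fun x y h ↦ by
  ext i
  rw [← ofColumns_apply_basis e x, h, ofColumns_apply_basis]

theorem hilbertSchmidtNormSq_ofColumns (x : ℓ²(ι, H)) :
    hilbertSchmidtNormSq e (ofColumns e x) = ‖x‖ₑ ^ 2 := by
  simp only [hilbertSchmidtNormSq, ofColumns_apply_basis, lp_enorm_sq_eq_tsum]

theorem exists_ofColumns_eq {T : K →L[𝕜] H} (hT : hilbertSchmidtNormSq e T ≠ ∞) :
    ∃ x, ofColumns e x = T :=
  ⟨⟨_, memℓp_two_of_hilbertSchmidtNormSq_ne_top hT⟩,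
    ext_hilbertBasis e fun i ↦ ofColumns_apply_basis e _ i⟩

end OfColumns

section Multiplication

/-- Left multiplication `T ↦ A ∘ T` of Hilbert–Schmidt operators, acting on columns. -/
def leftMul (ι : Type*) (A : H →L[𝕜] H) : ℓ²(ι, H) →L[𝕜] ℓ²(ι, H) :=
  lp.mapCLM 2 (fun _ ↦ A) (norm_nonneg A) fun _ ↦ le_rfl

theorem leftMul_apply (A : H →L[𝕜] H) (x : ℓ²(ι, H)) (i : ι) : leftMul ι A x i = A (x i) :=
  rfl

theorem norm_leftMul_le (A : H →L[𝕜] H) : ‖leftMul ι A‖ ≤ ‖A‖ :=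
  lp.norm_mapCLM_le _ _ (norm_nonneg A) fun _ ↦ le_rfl

variable [CompleteSpace H]

theorem isSelfAdjoint_leftMul {A : H →L[𝕜] H} (hA : IsSelfAdjoint A) :
    IsSelfAdjoint (leftMul ι A) := by
  rw [isSelfAdjoint_iff_isSymmetric]
  intro x y
  simp only [coe_coe, lp.inner_eq_tsum, leftMul_apply]
  exact tsum_congr fun i ↦ hA.isSymmetric (x i) (y i)

theorem ofColumns_leftMul (e : HilbertBasis ι 𝕜 K) (A : H →L[𝕜] H) (x : ℓ²(ι, H)) :
    ofColumns e (leftMul ι A x) = A ∘L ofColumns e x :=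
  ext_hilbertBasis e fun i ↦ by
    rw [comp_apply, ofColumns_apply_basis, ofColumns_apply_basis, leftMul_apply]

variable [CompleteSpace K] (e : HilbertBasis ι 𝕜 K) (B : K →L[𝕜] K)

theorem hilbertSchmidtNormSq_ofColumns_comp_le (x : ℓ²(ι, H)) :
    hilbertSchmidtNormSq e (ofColumns e x ∘L B) ≤ (‖B‖ₑ * ‖x‖ₑ) ^ 2 := by
  rw [mul_pow, ← hilbertSchmidtNormSq_ofColumns e x]
  exact hilbertSchmidtNormSq_comp_le_enorm_right_sq_mul e e _ _

theorem memℓp_two_ofColumns_comp (x : ℓ²(ι, H)) :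
    Memℓp (fun i ↦ ofColumns e x (B (e i))) 2 :=
  memℓp_two_of_hilbertSchmidtNormSq_ne_top (T := ofColumns e x ∘L B) <| ne_top_of_le_ne_top
    (by finiteness) (hilbertSchmidtNormSq_ofColumns_comp_le e B x)

/-- Right multiplication `T ↦ T ∘ B` of Hilbert–Schmidt operators, acting on columns. -/
def rightMul : ℓ²(ι, H) →L[𝕜] ℓ²(ι, H) :=
  LinearMap.mkContinuous
    { toFun x := ⟨fun i ↦ ofColumns e x (B (e i)), memℓp_two_ofColumns_comp e B x⟩
      map_add' x y := by ext i; simp only [map_add]; rfl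
      map_smul' c x := by ext i; simp }
    ‖B‖ fun x ↦ by
      have h : ‖(⟨_, memℓp_two_ofColumns_comp e B x⟩ : ℓ²(ι, H))‖ₑ ^ 2 ≤ (‖B‖ₑ * ‖x‖ₑ) ^ 2 :=
        (lp_enorm_sq_eq_tsum _).trans_le (hilbertSchmidtNormSq_ofColumns_comp_le e B x)
      rw [ENNReal.pow_le_pow_left_iff two_ne_zero] at h
      simpa using ENNReal.toReal_mono (by finiteness) h

theorem rightMul_apply (x : ℓ²(ι, H)) (i : ι) : rightMul e B x i = ofColumns e x (B (e i)) :=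
  rfl

theorem norm_rightMul_le : ‖rightMul (H := H) e B‖ ≤ ‖B‖ :=
  LinearMap.mkContinuous_norm_le _ (norm_nonneg B) _

theorem ofColumns_rightMul (x : ℓ²(ι, H)) :
    ofColumns e (rightMul e B x) = ofColumns e x ∘L B :=
  ext_hilbertBasis e fun i ↦ by rw [ofColumns_apply_basis, rightMul_apply, comp_apply]

theorem adjoint_rightMul : adjoint (rightMul (H := H) e B) = rightMul e (adjoint B) := by
  classical
  refine lp.ext_continuousLinearMap ENNReal.ofNat_ne_top fun j ↦ ?_
  ext h i
  refine ext_inner_left 𝕜 fun g ↦ ?_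
  calc ⟪g, (adjoint (rightMul (H := H) e B) (lp.single 2 j h) : ℓ²(ι, H)) i⟫_𝕜
    _ = ⟪lp.single 2 i g, adjoint (rightMul (H := H) e B) (lp.single 2 j h)⟫_𝕜 :=
      (lp.inner_single_left i g (adjoint (rightMul (H := H) e B) (lp.single 2 j h))).symm
    _ = ⟪rightMul e B (lp.single 2 i g), lp.single 2 j h⟫_𝕜 := adjoint_inner_right _ _ _
    _ = ⟪g, rightMul e (adjoint B) (lp.single 2 j h) i⟫_𝕜 := by
      rw [lp.inner_single_right, rightMul_apply, rightMul_apply, ofColumns_single,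
        ofColumns_single, adjoint_inner_right, inner_smul_left, inner_smul_right, inner_conj_symm]

theorem isSelfAdjoint_rightMul {B : K →L[𝕜] K} (hB : IsSelfAdjoint B) :
    IsSelfAdjoint (rightMul (H := H) e B) :=
  (adjoint_rightMul e B).trans (congrArg (rightMul e) hB.adjoint_eq)

theorem commute_leftMul_rightMul (A : H →L[𝕜] H) : Commute (leftMul ι A) (rightMul e B) := by
  ext1 x
  refine ofColumns_injective e ?_
  change ofColumns e (leftMul ι A (rightMul e B x)) = ofColumns e (rightMul e B (leftMul ι A x))
  simp only [ofColumns_leftMul, ofColumns_rightMul, ContinuousLinearMap.comp_assoc]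

end Multiplication

end HilbertSchmidt

section Quasicommutator

section OperatorPolynomial

variable {E F : Type*} [NormedAddCommGroup E] [NormedSpace ℂ E] [NormedAddCommGroup F]
  [NormedSpace ℂ F]

theorem map_dividedDifference_apply_of_semiconj (φ : E →L[ℂ] F) {a b : E →L[ℂ] E}
    {a' b' : F →L[ℂ] F} (ha : Function.Semiconj φ a a') (hb : Function.Semiconj φ b b') (p : ℝ[X])
    (x : E) : φ (dividedDifference p a b x) = dividedDifference p a' b' (φ x) := by
  simp [dividedDifference, Polynomial.sum, (ha.iterate_right _).eq, (hb.iterate_right _).eq,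
    map_smul_of_tower]

theorem aeval_postcomp_apply (A : F →L[ℂ] F) (p : ℝ[X]) (Q : E →L[ℂ] F) :
    aeval (postcomp E A : (E →L[ℂ] F) →L[ℂ] E →L[ℂ] F) p Q = aeval A p ∘L Q := by
  have iterate (k : ℕ) : (postcomp E A)^[k] Q = (A ^ k) ∘L Q := by
    induction k with
    | zero => rfl
    | succ k ih => rw [Function.iterate_succ_apply', ih, pow_succ']; rfl
  ext v
  simp [aeval_eq_sum_range, iterate]

theorem aeval_precomp_apply (B : E →L[ℂ] E) (p : ℝ[X]) (Q : E →L[ℂ] F) :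
    aeval (precomp F B : (E →L[ℂ] F) →L[ℂ] E →L[ℂ] F) p Q = Q ∘L aeval B p := by
  have iterate (k : ℕ) : (precomp F B)^[k] Q = Q ∘L (B ^ k) := by
    induction k with
    | zero => rfl
    | succ k ih => rw [Function.iterate_succ_apply', ih, pow_succ]; rfl
  ext v
  simp [aeval_eq_sum_range, iterate, map_smul_of_tower]

theorem dividedDifference_postcomp_precomp_apply (p : ℝ[X]) (A : F →L[ℂ] F) (B : E →L[ℂ] E)
    (Q : E →L[ℂ] F) :
    dividedDifference p (postcomp E A : (E →L[ℂ] F) →L[ℂ] E →L[ℂ] F) (precomp F B)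
      (A ∘L Q - Q ∘L B) = aeval A p ∘L Q - Q ∘L aeval B p := by
  have commute : Commute (postcomp E A : (E →L[ℂ] F) →L[ℂ] E →L[ℂ] F) (precomp F B) := rfl
  rw [← aeval_postcomp_apply, ← aeval_precomp_apply, ← sub_apply,
    ← dividedDifference_mul_sub p commute]
  rfl

end OperatorPolynomial

variable {ι H K : Type*} [NormedAddCommGroup H] [InnerProductSpace ℂ H] [CompleteSpace H]
  [NormedAddCommGroup K] [InnerProductSpace ℂ K] [CompleteSpace K]
  {A : H →L[ℂ] H} {B : K →L[ℂ] K}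

theorem norm_dividedDifference_leftMul_rightMul_le (e : HilbertBasis ι ℂ K) (hA : IsSelfAdjoint A)
    (hB : IsSelfAdjoint B) {M L : ℝ} (hAM : ‖A‖ ≤ M) (hBM : ‖B‖ ≤ M) {p : ℝ[X]}
    (hp : ∀ t ∈ Icc (-M) M, |(derivative p).eval t| ≤ L) :
    ‖dividedDifference p (leftMul ι A) (rightMul e B)‖ ≤ L :=
  norm_dividedDifference_le (isSelfAdjoint_leftMul hA) (isSelfAdjoint_rightMul e hB)
    (commute_leftMul_rightMul e B A) ((norm_leftMul_le A).trans hAM)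
    ((norm_rightMul_le e B).trans hBM) hp

theorem hilbertSchmidtNormSq_aeval_quasicommutator_le (e : HilbertBasis ι ℂ K)
    (hA : IsSelfAdjoint A) (hB : IsSelfAdjoint B) {M : ℝ} (hAM : ‖A‖ ≤ M) (hBM : ‖B‖ ≤ M)
    {L : ℝ≥0} {p : ℝ[X]} (hp : ∀ t ∈ Icc (-M) M, |(derivative p).eval t| ≤ L) {Q : K →L[ℂ] H}
    (hQ : hilbertSchmidtNormSq e (A ∘L Q - Q ∘L B) ≠ ∞) :
    hilbertSchmidtNormSq e (aeval A p ∘L Q - Q ∘L aeval B p) ≤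
      L ^ 2 * hilbertSchmidtNormSq e (A ∘L Q - Q ∘L B) := by
  obtain ⟨x, hx⟩ := exists_ofColumns_eq e hQ
  let D : ℓ²(ι, H) →L[ℂ] ℓ²(ι, H) := dividedDifference p (leftMul ι A) (rightMul e B)
  have ofColumns_D : ofColumns e (D x) = aeval A p ∘L Q - Q ∘L aeval B p := by
    have left : Function.Semiconj (ofColumns e) (leftMul ι A) (postcomp K A) :=
      ofColumns_leftMul e A
    have right : Function.Semiconj (ofColumns (H := H) e) (rightMul e B) (precomp H B) :=
      ofColumns_rightMul e B
    rw [← dividedDifference_postcomp_precomp_apply, ← hx]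
    exact map_dividedDifference_apply_of_semiconj (ofColumns e) left right p x
  have norm_D : ‖D‖₊ ≤ L :=
    norm_dividedDifference_leftMul_rightMul_le e hA hB hAM hBM hp
  rw [← ofColumns_D, ← hx, hilbertSchmidtNormSq_ofColumns, hilbertSchmidtNormSq_ofColumns,
    ← mul_pow]
  gcongr
  exact (D.le_opENorm x).trans (by gcongr; exact ENNReal.coe_le_coe.2 norm_D)

theorem hilbertSchmidtNormSq_quasicommutator_le_of_ne_top (e : HilbertBasis ι ℂ K)
    (hA : IsSelfAdjoint A) (hB : IsSelfAdjoint B) {L : ℝ≥0} {f : ℝ → ℝ} (hf : LipschitzWith L f)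
    {Q : K →L[ℂ] H} (hQ : hilbertSchmidtNormSq e (A ∘L Q - Q ∘L B) ≠ ∞) :
    hilbertSchmidtNormSq e (cfc f A ∘L Q - Q ∘L cfc f B) ≤
      L ^ 2 * hilbertSchmidtNormSq e (A ∘L Q - Q ∘L B) := by
  let M : ℝ := ‖A‖ + ‖B‖ + 1
  have hAM : ‖A‖ ≤ M := by linarith [norm_nonneg B]
  have hBM : ‖B‖ ≤ M := by linarith [norm_nonneg A]
  have hM : -M < M := by linarith [norm_nonneg A, norm_nonneg B]
  obtain ⟨p, hp', hp⟩ := exists_polynomial_tendstoUniformlyOn_of_lipschitzWith hf hM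
  have tendsto_quasicommutator :
      Tendsto (fun n ↦ aeval A (p n) ∘L Q - Q ∘L aeval B (p n)) atTop
        (𝓝 (cfc f A ∘L Q - Q ∘L cfc f B)) := by
    have tendsto_A := tendsto_aeval_cfc_of_tendstoUniformlyOn hA hAM hp
    have tendsto_B := tendsto_aeval_cfc_of_tendstoUniformlyOn hB hBM hp
    exact (((precomp H Q).continuous.tendsto _).comp tendsto_A).sub
      (((postcomp K Q).continuous.tendsto _).comp tendsto_B)
  exact ((lowerSemicontinuous_hilbertSchmidtNormSq e).isClosed_preimage _).mem_of_tendsto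
    tendsto_quasicommutator <| .of_forall fun n ↦
      hilbertSchmidtNormSq_aeval_quasicommutator_le e hA hB hAM hBM (hp' n) hQ

theorem quasicommutator_eq_zero_of_lipschitzWith_zero (hA : IsSelfAdjoint A)
    (hB : IsSelfAdjoint B) {f : ℝ → ℝ} (hf : LipschitzWith 0 f) (Q : K →L[ℂ] H) :
    cfc f A ∘L Q - Q ∘L cfc f B = 0 := by
  have f_const : f = fun _ ↦ f 0 :=
    funext fun x ↦ by simpa [sub_eq_zero] using hf.dist_le_mul x 0
  rw [f_const, cfc_const _ A hA, cfc_const _ B hB]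
  ext v
  simp [Algebra.algebraMap_eq_smul_one]

theorem lipschitz_quasicommutator_hilbert_schmidt_general (e : HilbertBasis ι ℂ K)
    (hA : IsSelfAdjoint A) (hB : IsSelfAdjoint B) {L : ℝ≥0} {f : ℝ → ℝ}
    (hf : LipschitzOnWith L f (spectrum ℝ A ∪ spectrum ℝ B)) (Q : K →L[ℂ] H) :
    hilbertSchmidtNormSq e (cfc f A ∘L Q - Q ∘L cfc f B) ≤
      L ^ 2 * hilbertSchmidtNormSq e (A ∘L Q - Q ∘L B) := by
  obtain ⟨g, hg, hfg⟩ := hf.extend_real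
  rw [cfc_congr (hfg.mono subset_union_left), cfc_congr (hfg.mono subset_union_right)]
  by_cases hQ : hilbertSchmidtNormSq e (A ∘L Q - Q ∘L B) = ∞
  · obtain rfl | hL := eq_or_ne L 0
    · simp [quasicommutator_eq_zero_of_lipschitzWith_zero hA hB hg, hilbertSchmidtNormSq]
    · simp [hQ, hL]
  · exact hilbertSchmidtNormSq_quasicommutator_le_of_ne_top e hA hB hg hQ

end Quasicommutator

end

/-- Birman–Solomyak quasicommutator estimate: for a Lipschitz function `f` with constant
`L`, bounded self-adjoint operators `A, B` and a bounded operator `Q` on a separable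
complex Hilbert space, `‖f(A)Q − Q f(B)‖_{S₂} ≤ L·‖AQ − QB‖_{S₂}`, the Hilbert–Schmidt
norms being computed in `[0,∞]` via any Hilbert basis. -/
theorem lipschitz_quasicommutator_hilbert_schmidt
    {H : Type*} [NormedAddCommGroup H] [InnerProductSpace ℂ H] [CompleteSpace H]
    [TopologicalSpace.SeparableSpace H]
    (f : ℝ → ℝ) (L : ℝ) (hf : ∀ x y : ℝ, |f x - f y| ≤ L * |x - y|)
    (A B Q : H →L[ℂ] H) (hA : IsSelfAdjoint A) (hB : IsSelfAdjoint B) :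
    ∀ (ι : Type*) (e : HilbertBasis ι ℂ H),
      ∑' i : ι, (‖(cfc f A * Q - Q * cfc f B) (e i)‖₊ : ℝ≥0∞) ^ 2
        ≤ ENNReal.ofReal L ^ 2 * ∑' i : ι, (‖(A * Q - Q * B) (e i)‖₊ : ℝ≥0∞) ^ 2 := by
  intro ι e
  have L_nonneg : 0 ≤ L := by simpa using (abs_nonneg _).trans (hf 1 0)
  have hf' : LipschitzWith L.toNNReal f := .of_dist_le_mul fun x y ↦ by
    simpa only [Real.coe_toNNReal L L_nonneg, Real.dist_eq] using hf x y
  exact lipschitz_quasicommutator_hilbert_schmidt_general e hA hB hf'.lipschitzOnWith Q
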